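/- Let F be a field of characteristic ≠ 2 and let q be a nondegenerate quadratic form over F. If q becomes isotropic over a field extension L/F of odd finite degree, then q is isotropic over F. -/

import Mathlib

/-!
STATEMENT 7 (Springer's theorem): Let `F` be a field of characteristic `≠ 2` and `q`
a nondegenerate quadratic form over `F`.  If `q` becomes isotropic over a field
extension `L/F` of odd finite degree, then `q` is isotropic over `F`.

Characteristic `≠ 2` is expressed by `Invertible (2 : F)`; nondegeneracy is expressed
via the polar bilinear form having trivial radical.
-/

universe u

open scoped TensorProduct

/-- A quadratic form is nondegenerate if its polar form has trivial radical. -/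
def QFNondegenerate {F : Type u} [Field F] {V : Type u} [AddCommGroup V] [Module F V]
    (q : QuadraticForm F V) : Prop :=
  ∀ v : V, (∀ w : V, QuadraticMap.polar q v w = 0) → v = 0

/-- A quadratic form is isotropic if it vanishes on some nonzero vector. -/
def QFIsotropic {F : Type u} [Field F] {V : Type u} [AddCommGroup V] [Module F V]
    (q : QuadraticForm F V) : Prop :=
  ∃ v : V, v ≠ 0 ∧ q v = 0

/-!
Expanding an isotropic vector of `q_L` along finitely many linearly independent vectors of `V`
replaces `q` by the quadratic form of a Gram matrix `M`, and adjoining one element at a time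
reduces to a simple extension `F[X]/(f)` with `f` irreducible of odd degree.

Suppose `M` is anisotropic over `F` and `f ∣ M(g)` for polynomials `gᵢ` not all divisible by `f`.
Reducing modulo `f` and removing common factors, the `gᵢ` may be assumed to have no common factor
and maximal degree `m < deg f`. The vector of coefficients of degree `m` is nonzero, hence not
isotropic, so `M(g) = f h` has degree exactly `2m`. Thus `deg h = 2m - deg f` is odd and smaller
than `deg f`. An irreducible factor `p` of `h` of odd degree divides `M(g)`, so by induction on the
degree it divides every `gᵢ`: a contradiction.
-/

section

open Polynomial Matrix

theorem exists_odd_natDegree_irreducible_dvd {R : Type*} [CommRing R] [IsDomain R]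
    [WfDvdMonoid R[X]] {h : R[X]} (hh : Odd h.natDegree) :
    ∃ p : R[X], Irreducible p ∧ Odd p.natDegree ∧ p ∣ h := by
  induction h using WfDvdMonoid.induction_on_irreducible with
  | zero => simp at hh
  | unit u hu => simp [natDegree_eq_zero_of_isUnit hu] at hh
  | mul k p hk hp ih =>
    by_cases hpo : Odd p.natDegree
    · exact ⟨p, hp, hpo, dvd_mul_right p k⟩
    · rw [natDegree_mul hp.ne_zero hk, Nat.odd_add] at hh
      obtain ⟨r, hr, hro, hrk⟩ := ih (by grind)
      exact ⟨r, hr, hro, hrk.mul_left p⟩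

theorem exists_natDegree_le_and_coeff_ne_zero {R ι : Type*} [Semiring R] [Finite ι] {g : ι → R[X]}
    (hg : g ≠ 0) : ∃ m, (∀ i, (g i).natDegree ≤ m) ∧ (fun i ↦ (g i).coeff m) ≠ 0 := by
  obtain ⟨i₀, hi₀⟩ := Function.ne_iff.1 hg
  have : Nonempty ι := ⟨i₀⟩
  obtain ⟨i, hi⟩ := Finite.exists_max fun j ↦ (g j).degree
  have hgi : g i ≠ 0 := fun h ↦ hi₀ <| by simpa [h] using hi i₀
  exact ⟨(g i).natDegree, fun j ↦ natDegree_le_natDegree (hi j),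
    Function.ne_iff.2 ⟨i, leadingCoeff_ne_zero.2 hgi⟩⟩

theorem exists_eq_smul_and_isUnit_of_forall_dvd {α ι : Type*} [CommRing α] [IsDomain α]
    [IsGCDMonoid α] [Finite ι] {g : ι → α} (hg : g ≠ 0) :
    ∃ c ≠ (0 : α), ∃ g' : ι → α, g = c • g' ∧ ∀ p, (∀ i, p ∣ g' i) → IsUnit p := by
  have : Fintype ι := Fintype.ofFinite ι
  have : NormalizedGCDMonoid α := Classical.arbitrary _
  obtain ⟨i₀, -⟩ := Function.ne_iff.1 hg
  obtain ⟨g', hg', hgcd⟩ := Finset.extract_gcd g ⟨i₀, Finset.mem_univ i₀⟩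
  have hgg' : g = Finset.univ.gcd g • g' := funext fun i ↦ hg' i (Finset.mem_univ i)
  exact ⟨_, left_ne_zero_of_smul (hgg' ▸ hg), g', hgg',
    fun p hp ↦ isUnit_of_dvd_one (hgcd ▸ Finset.dvd_gcd fun i _ ↦ hp i)⟩

variable {ι : Type*} [Fintype ι] [DecidableEq ι]

section CommRing

variable {R S : Type*} [CommRing R] [CommRing S]

theorem toQuadraticForm'_apply (M : Matrix ι ι R) (x : ι → R) :
    M.toQuadraticForm' x = ∑ i, ∑ j, M i j * (x i * x j) := by
  simp only [toQuadraticForm', LinearMap.BilinMap.toQuadraticMap_apply, toLinearMap₂'_apply,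
    smul_eq_mul]
  exact Finset.sum_congr rfl fun i _ ↦ Finset.sum_congr rfl fun j _ ↦ by ring

theorem map_toQuadraticForm'_apply (f : R →+* S) (M : Matrix ι ι R) (x : ι → R) :
    f (M.toQuadraticForm' x) = (M.map f).toQuadraticForm' (f ∘ x) := by
  simp only [toQuadraticForm'_apply, map_sum, map_mul, map_apply, Function.comp_apply]

theorem anisotropic_toQuadraticForm'_map_of_bijective {f : R →+* S} (hf : Function.Bijective f)
    {M : Matrix ι ι R} (hM : M.toQuadraticForm'.Anisotropic) :
    (M.map f).toQuadraticForm'.Anisotropic := by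
  intro x hx
  obtain ⟨y, rfl⟩ := hf.surjective.comp_left x
  rw [← map_toQuadraticForm'_apply, map_eq_zero_iff f hf.injective, hM.eq_zero_iff] at hx
  simp [hx]

theorem dvd_toQuadraticForm'_iff_of_dvd_sub (M : Matrix ι ι R) {r : R} {x y : ι → R}
    (h : ∀ i, r ∣ x i - y i) : r ∣ M.toQuadraticForm' x ↔ r ∣ M.toQuadraticForm' y := by
  have hxy : Ideal.Quotient.mk (Ideal.span {r}) ∘ x = Ideal.Quotient.mk (Ideal.span {r}) ∘ y :=
    funext fun i ↦ Ideal.Quotient.eq.2 (Ideal.mem_span_singleton.2 (h i))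
  simp only [← Ideal.mem_span_singleton, ← Ideal.Quotient.eq_zero_iff_mem,
    map_toQuadraticForm'_apply, hxy]

theorem natDegree_toQuadraticForm'_map_C_le (M : Matrix ι ι R) {g : ι → R[X]} {m : ℕ}
    (hg : ∀ i, (g i).natDegree ≤ m) :
    ((M.map C).toQuadraticForm' g).natDegree ≤ m + m := by
  rw [toQuadraticForm'_apply]
  exact natDegree_sum_le_of_forall_le _ _ fun i _ ↦ natDegree_sum_le_of_forall_le _ _ fun j _ ↦
    (natDegree_C_mul_le _ _).trans (natDegree_mul_le_of_le (hg i) (hg j))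

theorem coeff_toQuadraticForm'_map_C (M : Matrix ι ι R) {g : ι → R[X]} {m : ℕ}
    (hg : ∀ i, (g i).natDegree ≤ m) :
    ((M.map C).toQuadraticForm' g).coeff (m + m) =
      M.toQuadraticForm' fun i ↦ (g i).coeff m := by
  simp only [toQuadraticForm'_apply, finsetSum_coeff, map_apply, coeff_C_mul,
    coeff_mul_add_eq_of_natDegree_le (hg _) (hg _)]

end CommRing

section Field

variable {F : Type*} [Field F]

theorem exists_natDegree_lt_dvd_toQuadraticForm' {f : F[X]} (hf : Irreducible f)
    (M : Matrix ι ι F[X]) {g : ι → F[X]} (hg : f ∣ M.toQuadraticForm' g) (hfg : ¬∀ i, f ∣ g i) :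
    ∃ g' : ι → F[X], (∀ i, (g' i).natDegree < f.natDegree) ∧
      (∀ p, (∀ i, p ∣ g' i) → IsUnit p) ∧ f ∣ M.toQuadraticForm' g' := by
  obtain ⟨i₀, hi₀⟩ := not_forall.1 hfg
  have hr₀ : (fun i ↦ g i % f) ≠ 0 :=
    Function.ne_iff.2 ⟨i₀, mt EuclideanDomain.mod_eq_zero.1 hi₀⟩
  obtain ⟨c, hc, g', hr, hprim⟩ := exists_eq_smul_and_isUnit_of_forall_dvd hr₀
  have hdeg (i) (hi : g' i ≠ 0) : c.natDegree + (g' i).natDegree < f.natDegree := by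
    rw [← natDegree_mul hc hi, ← smul_eq_mul, ← Pi.smul_apply, ← hr]
    exact natDegree_mod_lt _ hf.natDegree_pos.ne'
  have hfc : ¬f ∣ c := by
    have hg'₀ : g' ≠ 0 := fun h ↦ hr₀ (by rw [hr, h, smul_zero])
    obtain ⟨i, hi⟩ := Function.ne_iff.1 hg'₀
    exact fun h ↦ (natDegree_le_of_dvd h hc).not_gt (le_self_add.trans_lt (hdeg i hi))
  refine ⟨g', fun i ↦ ?_, hprim, ?_⟩
  · obtain hi | hi := eq_or_ne (g' i) 0
    · simpa [hi] using hf.natDegree_pos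
    · exact le_add_self.trans_lt (hdeg i hi)
  · have hmod (i) : f ∣ g i - g i % f :=
      ⟨g i / f, by linear_combination -EuclideanDomain.div_add_mod (g i) f⟩
    rw [dvd_toQuadraticForm'_iff_of_dvd_sub M hmod, hr, QuadraticMap.map_smul, smul_eq_mul] at hg
    exact (hf.prime.dvd_or_dvd hg).resolve_left fun h ↦ (hf.prime.dvd_or_dvd h).elim hfc hfc

theorem dvd_of_dvd_toQuadraticForm'_map_C {M : Matrix ι ι F} (hM : M.toQuadraticForm'.Anisotropic)
    {f : F[X]} (hf : Irreducible f) (hodd : Odd f.natDegree) {g : ι → F[X]}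
    (hg : f ∣ (M.map C).toQuadraticForm' g) (i : ι) : f ∣ g i := by
  induction hd : f.natDegree using Nat.strong_induction_on generalizing f g i with
  | _ d ih =>
  subst hd
  revert i
  by_contra hfg
  obtain ⟨g', hdeg, hprim, h, hh⟩ := exists_natDegree_lt_dvd_toQuadraticForm' hf _ hg hfg
  have hg'₀ : g' ≠ 0 := by
    rintro rfl
    exact not_isUnit_zero (hprim 0 fun _ ↦ dvd_rfl)
  obtain ⟨m, hm, hlead⟩ := exists_natDegree_le_and_coeff_ne_zero hg'₀
  have hcoeff : ((M.map C).toQuadraticForm' g').coeff (m + m) ≠ 0 := by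
    rwa [coeff_toQuadraticForm'_map_C M hm, Ne, hM.eq_zero_iff]
  have hmf : m < f.natDegree := by
    obtain ⟨i, hi⟩ := Function.ne_iff.1 hlead
    exact (le_natDegree_of_ne_zero hi).trans_lt (hdeg i)
  have hfh : f * h ≠ 0 := fun h₀ ↦ hcoeff (by rw [hh, h₀, coeff_zero])
  have hh₀ : h ≠ 0 := right_ne_zero_of_mul hfh
  have hdeg_add : f.natDegree + h.natDegree = m + m := by
    rw [← natDegree_mul hf.ne_zero hh₀, ← hh]
    exact natDegree_eq_of_le_of_coeff_ne_zero (natDegree_toQuadraticForm'_map_C_le M hm) hcoeff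
  obtain ⟨p, hp, hpodd, hph⟩ := exists_odd_natDegree_irreducible_dvd (h := h) (by grind)
  have hpf : p.natDegree < f.natDegree := by
    have := natDegree_le_of_dvd hph hh₀
    omega
  exact hp.not_isUnit (hprim p fun i ↦ ih _ hpf hp hpodd (hh ▸ hph.mul_left f) i rfl)

theorem anisotropic_toQuadraticForm'_map_of_powerBasis {A : Type*} [CommRing A] [IsDomain A]
    [Algebra F A] (pb : PowerBasis F A) (hodd : Odd (Module.finrank F A)) {M : Matrix ι ι F}
    (hM : M.toQuadraticForm'.Anisotropic) :
    (M.map (algebraMap F A)).toQuadraticForm'.Anisotropic := by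
  intro x hx
  choose g hg using fun i ↦ pb.exists_eq_aeval' (x i)
  obtain rfl : x = aeval pb.gen ∘ g := funext hg
  have hmap : (M.map C).map (aeval pb.gen : F[X] →ₐ[F] A) = M.map (algebraMap F A) :=
    Matrix.ext fun i j ↦ aeval_C _ _
  have hroot : aeval pb.gen ((M.map C).toQuadraticForm' g) = 0 := by
    rw [← hx, ← hmap]
    exact map_toQuadraticForm'_apply (aeval pb.gen : F[X] →ₐ[F] A).toRingHom _ g
  rw [pb.finrank, ← pb.natDegree_minpoly] at hodd
  funext i
  exact aeval_eq_zero_of_dvd_aeval_eq_zero (dvd_of_dvd_toQuadraticForm'_map_C hM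
    (minpoly.irreducible pb.isIntegral_gen) hodd (minpoly.dvd F _ hroot) i) (minpoly.aeval F _)

open IntermediateField in
theorem anisotropic_toQuadraticForm'_map_of_odd_finrank {L : Type*} [Field L] [Algebra F L]
    (hodd : Odd (Module.finrank F L)) {M : Matrix ι ι F} (hM : M.toQuadraticForm'.Anisotropic) :
    (M.map (algebraMap F L)).toQuadraticForm'.Anisotropic := by
  have : FiniteDimensional F L := Module.finite_of_finrank_pos hodd.pos
  suffices h : (M.map (algebraMap F (⊤ : IntermediateField F L))).toQuadraticForm'.Anisotropic by
    have := anisotropic_toQuadraticForm'_map_of_bijective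
      (f := algebraMap (⊤ : IntermediateField F L) L) topEquiv.bijective h
    rwa [Matrix.map_map] at this
  induction (⊤ : IntermediateField F L) using induction_on_adjoin with
  | base =>
    exact anisotropic_toQuadraticForm'_map_of_bijective (botEquiv F L).symm.bijective hM
  | ih K α ih =>
    have hdvd : Module.finrank K K⟮α⟯ ∣ Module.finrank F L := by
      rw [← Module.finrank_mul_finrank F K L, ← Module.finrank_mul_finrank K K⟮α⟯ L]
      exact (dvd_mul_right _ _).mul_left _
    have := anisotropic_toQuadraticForm'_map_of_powerBasis
      (adjoin.powerBasis (Algebra.IsIntegral.isIntegral α)) (hodd.of_dvd_nat hdvd) ih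
    rwa [Matrix.map_map] at this

end Field

section Gram

variable {R A V : Type*} [CommRing R] [AddCommGroup V] [Module R V]

/-- The Gram matrix of a family of vectors with respect to a bilinear form. It turns the values of
a quadratic form on linear combinations of these vectors into those of a form in coordinates. -/
def gramMatrix (B : LinearMap.BilinForm R V) (v : ι → V) : Matrix ι ι R :=
  Matrix.of fun i j ↦ B (v i) (v j)

theorem toQuadraticMap_sum_smul (B : LinearMap.BilinForm R V) (v : ι → V) (x : ι → R) :
    B.toQuadraticMap (∑ i, x i • v i) = (gramMatrix B v).toQuadraticForm' x := by
  simp only [LinearMap.BilinMap.toQuadraticMap_apply, toQuadraticForm'_apply, gramMatrix, map_sum,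
    map_smul, LinearMap.sum_apply, LinearMap.smul_apply, smul_eq_mul, of_apply, Finset.mul_sum]
  rw [Finset.sum_comm]
  exact Finset.sum_congr rfl fun i _ ↦ Finset.sum_congr rfl fun j _ ↦ by ring

variable [Invertible (2 : R)]

theorem quadraticForm_sum_smul (q : QuadraticForm R V) (v : ι → V) (x : ι → R) :
    q (∑ i, x i • v i) = (gramMatrix q.associated v).toQuadraticForm' x := by
  rw [← toQuadraticMap_sum_smul, QuadraticMap.toQuadraticMap_associated]

theorem anisotropic_toQuadraticForm'_gramMatrix {q : QuadraticForm R V} (hq : q.Anisotropic)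
    {v : ι → V} (hv : LinearIndependent R v) :
    (gramMatrix q.associated v).toQuadraticForm'.Anisotropic := by
  intro x hx
  rw [← quadraticForm_sum_smul, hq.eq_zero_iff] at hx
  exact funext (Fintype.linearIndependent_iff.1 hv x hx)

variable [CommRing A] [Algebra R A]

theorem baseChange_sum_smul_one_tmul (q : QuadraticForm R V) (v : ι → V) (x : ι → A) :
    q.baseChange A (∑ i, x i • ((1 : A) ⊗ₜ[R] v i)) =
      ((gramMatrix q.associated v).map (algebraMap R A)).toQuadraticForm' x := by
  let : Invertible (2 : A) := (Invertible.map (algebraMap R A) 2).copy 2 (map_ofNat _ _).symm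
  have hgram : gramMatrix (q.baseChange A).associated (fun i ↦ (1 : A) ⊗ₜ[R] v i) =
      (gramMatrix q.associated v).map (algebraMap R A) := by
    refine Matrix.ext fun i j ↦ ?_
    simp [gramMatrix, QuadraticForm.associated_baseChange, LinearMap.BilinForm.baseChange_tmul,
      Algebra.algebraMap_eq_smul_one]
  rw [quadraticForm_sum_smul, hgram]

end Gram

theorem exists_linearIndependent_sum_smul_one_tmul {R A V : Type*} [CommRing R] [CommRing A]
    [Algebra R A] [AddCommGroup V] [Module R V] [Module.Free R V] (z : A ⊗[R] V) :
    ∃ (s : Finset (Module.Free.ChooseBasisIndex R V)) (v : s → V) (x : s → A),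
      LinearIndependent R v ∧ z = ∑ i, x i • ((1 : A) ⊗ₜ[R] v i) := by
  let b := Module.Free.chooseBasis R V
  let bA := b.baseChange A
  refine ⟨(bA.repr z).support, fun i ↦ b i, fun i ↦ bA.repr z i,
    b.linearIndependent.comp _ Subtype.val_injective, ?_⟩
  calc z = ∑ i ∈ (bA.repr z).support, bA.repr z i • bA i := (bA.linearCombination_repr z).symm
    _ = ∑ i : (bA.repr z).support, bA.repr z i • bA i := (Finset.sum_coe_sort _ _).symm
    _ = ∑ i : (bA.repr z).support, bA.repr z i • ((1 : A) ⊗ₜ[R] b i) :=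
      Finset.sum_congr rfl fun i _ ↦ by rw [Module.Basis.baseChange_apply]

end

theorem stmt7_general {F V L : Type*} [Field F] [Invertible (2 : F)] [AddCommGroup V] [Module F V]
    {q : QuadraticForm F V} (hq : q.Anisotropic) [Field L] [Algebra F L]
    (hodd : Odd (Module.finrank F L)) : (q.baseChange L).Anisotropic := by
  classical
  intro z hz
  obtain ⟨s, v, x, hv, rfl⟩ := exists_linearIndependent_sum_smul_one_tmul z
  rw [baseChange_sum_smul_one_tmul] at hz
  have hx : x = 0 := anisotropic_toQuadraticForm'_map_of_odd_finrank hodd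
    (anisotropic_toQuadraticForm'_gramMatrix hq hv) x hz
  simp [hx]

theorem stmt7 (F : Type u) [Field F] [Invertible (2 : F)]
    (V : Type u) [AddCommGroup V] [Module F V] [FiniteDimensional F V]
    (q : QuadraticForm F V) (hq : QFNondegenerate q)
    (L : Type u) [Field L] [Algebra F L] [FiniteDimensional F L]
    (hodd : Odd (Module.finrank F L))
    (hiso : QFIsotropic (q.baseChange L)) :
    QFIsotropic q := by
  rw [QFIsotropic, ← QuadraticMap.not_anisotropic_iff_exists] at hiso ⊢
  exact mt (fun h ↦ stmt7_general h hodd) hiso
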